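/- Let r > 0, α > 1, γ = (α−1)/r, ω ∈ ℝ, 0 ≤ φ < 1 and τ > 0. Define for real y ≥ 0 and λ > 0 the score s(y, λ) = γλ·(ψ(γλ+y) + ψ(γλ+α) − ψ(γλ+y+α+r) − ψ(γλ)) and the updating function g(y, λ) = exp(ω + φ·log λ + τ·s(y, λ)). Then for every λ ≥ exp((ω − τ(α+r+1))/(1−φ)) and every real y ≥ 0, the partial derivative of g with respect to λ satisfies |∂g(y, λ)/∂λ| ≤ (τ·(3α+2r+3) + φ)·exp(τ(2α+r+2)). -/

import Mathlib

noncomputable def digamma (x : ℝ) : ℝ := deriv (fun t => Real.log (Real.Gamma t)) x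

noncomputable def bnbScore (r a lam y : ℝ) : ℝ :=
  ((a - 1) / r) * lam *
    (digamma (((a - 1) / r) * lam + y) + digamma (((a - 1) / r) * lam + a) -
      digamma (((a - 1) / r) * lam + y + a + r) - digamma (((a - 1) / r) * lam))

noncomputable def gasUpdate (r a om ph ta y lam : ℝ) : ℝ :=
  Real.exp (om + ph * Real.log lam + ta * bnbScore r a lam y)

/-!
Write `x = γλ` with `γ = (α - 1) / r`. In terms of forward differences,
`s(y, λ) = x (Δ_[α] ψ x - Δ_[α + r] ψ (x + y))`, so
`λ ∂s/∂λ = s + x² (Δ_[α] ψ₁ x - Δ_[α + r] ψ₁ (x + y))`.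
Log-convexity of `Γ` makes `ψ` increasing, and its unit increment at `x` is `1 / x`, so
`0 ≤ Δ_[h] ψ x ≤ (h + 1) / x`. Thus `Δ_[h] ψ` tends to `0` at infinity; as its own unit increments
`1 / (x + h) - 1 / x` increase with `x`, it is decreasing, so `ψ₁` is decreasing too. The unit
increment of `ψ₁` is `-1 / x²`, so `0 ≤ -Δ_[h] ψ₁ x ≤ (h + 1) / x²`, and `s` and `λ ∂s/∂λ` are
bounded uniformly in `λ` and `y`. Finally `∂g/∂λ = (φ + τ λ ∂s/∂λ) g / λ`, and the lower bound on
`λ` controls `g / λ = exp (ω - (1 - φ) log λ + τ s)`.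
-/

open Real Set Filter Topology fwdDiff

section ForwardDifferences

variable {f : ℝ → ℝ} {a : ℝ}

lemma fwdDiff_le_mul_of_antitoneOn_fwdDiff_one (hf : MonotoneOn f (Ioi a))
    (hΔ : AntitoneOn (Δ_[1] f) (Ioi a)) {x h : ℝ} (hx : a < x) (hh : 0 ≤ h) :
    Δ_[h] f x ≤ (h + 1) * Δ_[1] f x := by
  have hmem {k : ℝ} (hk : 0 ≤ k) : x + k ∈ Ioi a := hx.trans_le (le_add_of_nonneg_right hk)
  have hnat (n : ℕ) : Δ_[(n : ℝ)] f x ≤ n * Δ_[1] f x := by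
    induction n with
    | zero => simp [fwdDiff]
    | succ n ih =>
      have hstep : Δ_[1] f (x + n) ≤ Δ_[1] f x := hΔ hx (hmem n.cast_nonneg) (by simp)
      simp only [fwdDiff, Nat.cast_succ, ← add_assoc] at hstep ih ⊢
      linarith
  have hone : 0 ≤ Δ_[1] f x := sub_nonneg.mpr (hf hx (hmem zero_le_one) (by simp))
  calc Δ_[h] f x ≤ Δ_[(⌈h⌉₊ : ℝ)] f x :=
        sub_le_sub_right
          (hf (hmem hh) (hmem (Nat.cast_nonneg _)) (by gcongr; exact Nat.le_ceil h)) _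
    _ ≤ ⌈h⌉₊ * Δ_[1] f x := hnat _
    _ ≤ (h + 1) * Δ_[1] f x := by gcongr; exact (Nat.ceil_lt_add_one hh).le

lemma antitoneOn_of_monotoneOn_fwdDiff_one_of_tendsto {l : ℝ}
    (hΔ : MonotoneOn (Δ_[1] f) (Ioi a)) (hlim : Tendsto f atTop (𝓝 l)) :
    AntitoneOn f (Ioi a) := by
  intro s hs t ht hst
  have hmem {u : ℝ} (hu : a < u) (n : ℕ) : u + n ∈ Ioi a :=
    hu.trans_le (le_add_of_nonneg_right n.cast_nonneg)
  -- `n ↦ f (t + n) - f (s + n)` is monotone and tends to `0`, so it is nonpositive at `n = 0`.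
  have hmono : Monotone fun n : ℕ => f (t + n) - f (s + n) := by
    refine monotone_nat_of_le_succ fun n => ?_
    have hstep := hΔ (hmem hs n) (hmem ht n) (by gcongr)
    simp only [fwdDiff, add_assoc] at hstep
    push_cast
    linarith
  have hshift (u : ℝ) : Tendsto (fun n : ℕ => f (u + n)) atTop (𝓝 l) :=
    hlim.comp (tendsto_atTop_add_const_left _ u tendsto_natCast_atTop_atTop)
  have hzero := hmono.ge_of_tendsto ((hshift t).sub (hshift s)) 0
  simpa using hzero

end ForwardDifferences

lemma analyticAt_Gamma {x : ℝ} (hx : ∀ m : ℕ, x ≠ -m) : AnalyticAt ℝ Gamma x := by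
  have hcomplex : AnalyticAt ℂ Complex.Gamma x := by
    have hinv := (Complex.differentiable_one_div_Gamma.analyticAt (x : ℂ)).fun_inv
      (inv_ne_zero (Complex.Gamma_ne_zero fun m => mod_cast hx m))
    simpa only [inv_inv] using hinv
  exact hcomplex.re_ofReal

lemma analyticAt_log_Gamma {x : ℝ} (hx : 0 < x) : AnalyticAt ℝ (fun t => log (Gamma t)) x :=
  (analyticAt_Gamma fun m => ((neg_nonpos.mpr m.cast_nonneg).trans_lt hx).ne').log
    (Gamma_pos_of_pos hx)

section Digamma

variable {x z h : ℝ}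

/-- The trigamma function `ψ₁ = ψ'`; like `digamma`, it is meaningful on `(0, ∞)` only. -/
noncomputable def trigamma : ℝ → ℝ := deriv digamma

lemma hasDerivAt_log_Gamma (hx : 0 < x) :
    HasDerivAt (fun t => log (Gamma t)) (digamma x) x :=
  (analyticAt_log_Gamma hx).differentiableAt.hasDerivAt

lemma hasDerivAt_digamma (hx : 0 < x) : HasDerivAt digamma (trigamma x) x :=
  (analyticAt_log_Gamma hx).deriv.differentiableAt.hasDerivAt

lemma hasDerivAt_fwdDiff_digamma (hx : 0 < x) (hh : 0 ≤ h) :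
    HasDerivAt (Δ_[h] digamma) (Δ_[h] trigamma x) x :=
  ((hasDerivAt_digamma (by positivity)).comp_add_const x h).sub (hasDerivAt_digamma hx)

lemma fwdDiff_one_digamma (hx : 0 < x) : Δ_[1] digamma x = x⁻¹ := by
  have hΔ : Δ_[1] (fun t => log (Gamma t)) =ᶠ[𝓝 x] log := by
    filter_upwards [lt_mem_nhds hx] with t ht
    rw [fwdDiff, Gamma_add_one ht.ne', log_mul ht.ne' (Gamma_pos_of_pos ht).ne',
      add_sub_cancel_right]
  exact (((hasDerivAt_log_Gamma (by positivity)).comp_add_const x 1).sub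
    (hasDerivAt_log_Gamma hx)).unique ((hasDerivAt_log hx.ne').congr_of_eventuallyEq hΔ)

lemma fwdDiff_one_trigamma (hx : 0 < x) : Δ_[1] trigamma x = -(x ^ 2)⁻¹ := by
  have hΔ : Δ_[1] digamma =ᶠ[𝓝 x] Inv.inv := by
    filter_upwards [lt_mem_nhds hx] with t ht using fwdDiff_one_digamma ht
  exact (hasDerivAt_fwdDiff_digamma hx zero_le_one).unique
    ((hasDerivAt_inv hx.ne').congr_of_eventuallyEq hΔ)

lemma monotoneOn_digamma : MonotoneOn digamma (Ioi 0) :=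
  convexOn_log_Gamma.monotoneOn_deriv fun _ hx => (hasDerivAt_log_Gamma hx).differentiableAt

lemma fwdDiff_digamma_nonneg (hx : 0 < x) (hh : 0 ≤ h) : 0 ≤ Δ_[h] digamma x :=
  sub_nonneg.mpr (monotoneOn_digamma hx (add_pos_of_pos_of_nonneg hx hh) (by simpa))

lemma fwdDiff_digamma_le (hx : 0 < x) (hh : 0 ≤ h) : Δ_[h] digamma x ≤ (h + 1) * x⁻¹ := by
  rw [← fwdDiff_one_digamma hx]
  refine fwdDiff_le_mul_of_antitoneOn_fwdDiff_one monotoneOn_digamma ?_ hx hh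
  exact (inv_antitoneOn_Ioi (α := ℝ)).congr fun t ht => (fwdDiff_one_digamma ht).symm

lemma tendsto_fwdDiff_digamma_atTop (hh : 0 ≤ h) : Tendsto (Δ_[h] digamma) atTop (𝓝 0) := by
  have hbound : Tendsto (fun t : ℝ => (h + 1) * t⁻¹) atTop (𝓝 0) := by
    simpa only [mul_zero] using tendsto_inv_atTop_zero.const_mul (h + 1)
  refine squeeze_zero' ?_ ?_ hbound
  · filter_upwards [eventually_gt_atTop 0] with t ht using fwdDiff_digamma_nonneg ht hh
  · filter_upwards [eventually_gt_atTop 0] with t ht using fwdDiff_digamma_le ht hh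

lemma monotoneOn_fwdDiff_inv (hh : 0 ≤ h) : MonotoneOn (Δ_[h] fun t : ℝ => t⁻¹) (Ioi 0) := by
  have heq {t : ℝ} (ht : 0 < t) : (t + h)⁻¹ - t⁻¹ = -(h / (t * (t + h))) := by
    field_simp
    ring
  intro s (hs : 0 < s) t (ht : 0 < t) hst
  simp only [fwdDiff, heq hs, heq ht]
  gcongr

lemma antitoneOn_fwdDiff_digamma (hh : 0 ≤ h) : AntitoneOn (Δ_[h] digamma) (Ioi 0) := by
  refine antitoneOn_of_monotoneOn_fwdDiff_one_of_tendsto ?_ (tendsto_fwdDiff_digamma_atTop hh)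
  refine (monotoneOn_fwdDiff_inv hh).congr fun t (ht : 0 < t) => ?_
  calc (t + h)⁻¹ - t⁻¹ = Δ_[1] digamma (t + h) - Δ_[1] digamma t := by
        rw [fwdDiff_one_digamma ht, fwdDiff_one_digamma (by positivity)]
    _ = Δ_[1] (Δ_[h] digamma) t := by
        simp only [fwdDiff, add_right_comm t h 1]
        ring

lemma fwdDiff_trigamma_nonpos (hx : 0 < x) (hh : 0 ≤ h) : Δ_[h] trigamma x ≤ 0 := by
  rw [← (hasDerivAt_fwdDiff_digamma hx hh).deriv,
    ← derivWithin_of_mem_nhds (Ioi_mem_nhds hx)]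
  exact (antitoneOn_fwdDiff_digamma hh).derivWithin_nonpos

lemma antitoneOn_trigamma : AntitoneOn trigamma (Ioi 0) := by
  intro s hs t _ hst
  simpa only [fwdDiff, add_sub_cancel, sub_nonpos] using
    fwdDiff_trigamma_nonpos hs (sub_nonneg.mpr hst)

lemma neg_fwdDiff_trigamma_le (hx : 0 < x) (hh : 0 ≤ h) :
    -Δ_[h] trigamma x ≤ (h + 1) * (x ^ 2)⁻¹ := by
  have hneg (k t : ℝ) : Δ_[k] (-trigamma) t = -Δ_[k] trigamma t := by
    simp only [fwdDiff, Pi.neg_apply]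
    ring
  have hone {t : ℝ} (ht : 0 < t) : Δ_[1] (-trigamma) t = (t ^ 2)⁻¹ := by
    rw [hneg, fwdDiff_one_trigamma ht, neg_neg]
  rw [← hneg, ← hone hx]
  refine fwdDiff_le_mul_of_antitoneOn_fwdDiff_one (f := -trigamma) antitoneOn_trigamma.neg ?_ hx hh
  intro s (hs : 0 < s) t (ht : 0 < t) hst
  rw [hone hs, hone ht]
  gcongr

lemma mul_fwdDiff_digamma_mem_Icc (hx : 0 < x) (hxz : x ≤ z) (hh : 0 ≤ h) :
    x * Δ_[h] digamma z ∈ Icc 0 (h + 1) := by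
  have hz : 0 < z := hx.trans_le hxz
  have hnonneg := fwdDiff_digamma_nonneg hz hh
  refine ⟨by positivity, ?_⟩
  calc x * Δ_[h] digamma z ≤ z * ((h + 1) * z⁻¹) := by gcongr; exact fwdDiff_digamma_le hz hh
    _ = h + 1 := by field_simp

lemma sq_mul_fwdDiff_trigamma_mem_Icc (hx : 0 < x) (hxz : x ≤ z) (hh : 0 ≤ h) :
    x ^ 2 * Δ_[h] trigamma z ∈ Icc (-(h + 1)) 0 := by
  have hz : 0 < z := hx.trans_le hxz
  have hnonpos := fwdDiff_trigamma_nonpos hz hh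
  refine ⟨?_, mul_nonpos_of_nonneg_of_nonpos (sq_nonneg x) hnonpos⟩
  rw [neg_le, ← mul_neg]
  calc x ^ 2 * -Δ_[h] trigamma z ≤ z ^ 2 * ((h + 1) * (z ^ 2)⁻¹) := by
        gcongr
        · exact neg_nonneg.mpr hnonpos
        · exact neg_fwdDiff_trigamma_le hz hh
    _ = h + 1 := by field_simp

end Digamma

section Score

variable {r a l y : ℝ}

lemma bnbScore_eq_fwdDiff (r a l y : ℝ) :
    bnbScore r a l y = (a - 1) / r * l *
      (Δ_[a] digamma ((a - 1) / r * l) - Δ_[a + r] digamma ((a - 1) / r * l + y)) := by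
  simp only [bnbScore, fwdDiff, ← add_assoc]
  ring

lemma bnbScore_mem_Icc (hr : 0 < r) (ha : 1 < a) (hl : 0 < l) (hy : 0 ≤ y) :
    bnbScore r a l y ∈ Icc (-(a + r + 1)) (a + 1) := by
  have hx : 0 < (a - 1) / r * l := mul_pos (div_pos (sub_pos.mpr ha) hr) hl
  have h₁ := mul_fwdDiff_digamma_mem_Icc hx le_rfl (h := a) (by positivity)
  have h₂ := mul_fwdDiff_digamma_mem_Icc hx (le_add_of_nonneg_right hy) (h := a + r) (by positivity)
  rw [bnbScore_eq_fwdDiff, mul_sub]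
  constructor <;> linarith [h₁.1, h₁.2, h₂.1, h₂.2]

lemma hasDerivAt_bnbScore (hr : 0 < r) (ha : 1 < a) (hl : 0 < l) (hy : 0 ≤ y) :
    HasDerivAt (fun l => bnbScore r a l y)
      ((bnbScore r a l y + ((a - 1) / r * l) ^ 2 *
        (Δ_[a] trigamma ((a - 1) / r * l) - Δ_[a + r] trigamma ((a - 1) / r * l + y))) / l) l := by
  have hγ : 0 < (a - 1) / r := div_pos (sub_pos.mpr ha) hr
  simp only [bnbScore_eq_fwdDiff]
  generalize (a - 1) / r = γ at hγ ⊢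
  have hx : HasDerivAt (fun l => γ * l) γ l := hasDerivAt_const_mul γ
  have hΔ₁ := (hasDerivAt_fwdDiff_digamma (h := a) (mul_pos hγ hl) (by positivity)).comp l hx
  have hΔ₂ := (hasDerivAt_fwdDiff_digamma (h := a + r) (x := γ * l + y) (by positivity)
    (by positivity)).comp l (hx.add_const y)
  refine (hx.fun_mul (hΔ₁.fun_sub hΔ₂)).congr_deriv ?_
  simp only [Function.comp_apply]
  field_simp

lemma abs_mul_deriv_bnbScore_le (hr : 0 < r) (ha : 1 < a) (hl : 0 < l) (hy : 0 ≤ y) :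
    |l * deriv (fun l => bnbScore r a l y) l| ≤ 2 * a + r + 2 := by
  have hx : 0 < (a - 1) / r * l := mul_pos (div_pos (sub_pos.mpr ha) hr) hl
  have hs := bnbScore_mem_Icc hr ha hl hy
  have h₁ := sq_mul_fwdDiff_trigamma_mem_Icc hx le_rfl (h := a) (by positivity)
  have h₂ := sq_mul_fwdDiff_trigamma_mem_Icc hx (le_add_of_nonneg_right hy) (h := a + r)
    (by positivity)
  rw [(hasDerivAt_bnbScore hr ha hl hy).deriv, mul_div_cancel₀ _ hl.ne', mul_sub, abs_le]
  constructor <;> linarith [hs.1, hs.2, h₁.1, h₁.2, h₂.1, h₂.2]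

end Score

section Update

variable {r a om ph ta y l : ℝ}

lemma hasDerivAt_gasUpdate (hl : l ≠ 0) (hs : DifferentiableAt ℝ (fun l => bnbScore r a l y) l) :
    HasDerivAt (fun l => gasUpdate r a om ph ta y l)
      ((ph + ta * (l * deriv (fun l => bnbScore r a l y) l)) *
        (gasUpdate r a om ph ta y l / l)) l := by
  refine ((((hasDerivAt_log hl).const_mul ph).const_add om).fun_add
    (hs.hasDerivAt.const_mul ta)).exp.congr_deriv ?_
  rw [gasUpdate]
  field_simp

lemma gasUpdate_div_le (hr : 0 < r) (ha : 1 < a) (hph : ph < 1) (hta : 0 ≤ ta) (hy : 0 ≤ y)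
    (hl : exp ((om - ta * (a + r + 1)) / (1 - ph)) ≤ l) :
    gasUpdate r a om ph ta y l / l ≤ exp (ta * (2 * a + r + 2)) := by
  have hl0 : 0 < l := (exp_pos _).trans_le hl
  have hlog : om - ta * (a + r + 1) ≤ log l * (1 - ph) :=
    (div_le_iff₀ (sub_pos.mpr hph)).mp ((le_log_iff_exp_le hl0).mpr hl)
  have hscore : ta * bnbScore r a l y ≤ ta * (a + 1) := by
    gcongr
    exact (bnbScore_mem_Icc hr ha hl0 hy).2
  calc gasUpdate r a om ph ta y l / l
      = exp (om + ph * log l + ta * bnbScore r a l y - log l) := by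
        rw [gasUpdate, exp_sub, exp_log hl0]
    _ ≤ exp (ta * (2 * a + r + 2)) := exp_le_exp.mpr (by linarith)

end Update

theorem gas_deriv_lam_bound (r a om ph ta : ℝ) (hr : 0 < r) (ha : 1 < a)
    (hph0 : 0 ≤ ph) (hph1 : ph < 1) (hta : 0 < ta) :
    ∀ lam : ℝ, Real.exp ((om - ta * (a + r + 1)) / (1 - ph)) ≤ lam → ∀ y : ℝ, 0 ≤ y →
      |deriv (fun l => gasUpdate r a om ph ta y l) lam| ≤
        (ta * (3 * a + 2 * r + 3) + ph) * Real.exp (ta * (2 * a + r + 2)) := by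
  intro lam hlam y hy
  have hlam0 : 0 < lam := (exp_pos _).trans_le hlam
  have hs := (hasDerivAt_bnbScore hr ha hlam0 hy).differentiableAt
  have hratio0 : 0 ≤ gasUpdate r a om ph ta y lam / lam := div_nonneg (exp_pos _).le hlam0.le
  rw [(hasDerivAt_gasUpdate hlam0.ne' hs).deriv, abs_mul, abs_of_nonneg hratio0]
  refine mul_le_mul ?_ (gasUpdate_div_le hr ha hph1 hta.le hy hlam) hratio0 (by positivity)
  calc |ph + ta * (lam * deriv (fun l => bnbScore r a l y) lam)|
      ≤ |ph| + |ta * (lam * deriv (fun l => bnbScore r a l y) lam)| := abs_add_le _ _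
    _ = ph + ta * |lam * deriv (fun l => bnbScore r a l y) lam| := by
        rw [abs_of_nonneg hph0, abs_mul, abs_of_pos hta]
    _ ≤ ph + ta * (3 * a + 2 * r + 3) := by
        gcongr
        linarith [abs_mul_deriv_bnbScore_le hr ha hlam0 hy]
    _ = ta * (3 * a + 2 * r + 3) + ph := add_comm _ _
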